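/- There exists a universal constant c > 0 such that the following holds. Let k ∈ ℕ and let α : [0,1] → [0,1] be continuous. Suppose that for every even m and every f' : S(m,1/2) → {0,1} with ‖f'^{>k}‖₂² ≤ ε', f' is α(ε')-close (with respect to the uniform measure on S(m,1/2)) to a function g' : S(m,1/2) → {0,1} of degree ≤ k. Then for every n ∈ ℕ and every ε ∈ [0,1] with α(ε) < 2^{−ck}, every f : {0,1}^n → {0,1} with W^{>k}(f) ≤ ε is α(ε)-close (with respect to the uniform measure on {0,1}^n) to a function g : {0,1}^n → {0,1} of degree ≤ k. -/

import Mathlib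

open Finset
open scoped Classical

/-- A point of the slice `S(n,p)`: a Boolean vector whose number of ones equals `p * n`. -/
abbrev SlicePoint (n : ℕ) (p : ℝ) : Type :=
  {x : Fin n → Bool // ((Finset.univ.filter (fun i => x i = true)).card : ℝ) = p * n}

variable {n : ℕ} {p : ℝ}

/-- Expectation with respect to the uniform measure on the slice. -/
noncomputable def sExp (f : SlicePoint n p → ℝ) : ℝ :=
  (∑ x : SlicePoint n p, f x) / (Fintype.card (SlicePoint n p) : ℝ)

/-- The inner product `⟨f,g⟩ = E_x [f x * g x]` on functions on the slice. -/
noncomputable def sInner (f g : SlicePoint n p → ℝ) : ℝ :=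
  sExp (fun x => f x * g x)

/-- `‖f‖₂² = E_x [f x ^ 2]`. -/
noncomputable def sNormSq (f : SlicePoint n p → ℝ) : ℝ := sInner f f

/-- `‖f‖₂`. -/
noncomputable def sNorm (f : SlicePoint n p → ℝ) : ℝ := Real.sqrt (sNormSq f)

/-- The `i`-th coordinate of a slice point, viewed as a real number in `{0,1}`. -/
def coordR (x : SlicePoint n p) (i : Fin n) : ℝ := if x.1 i then 1 else 0

/-- `AND_T (x) = ∏_{i ∈ T} x_i`. -/
def andT (T : Finset (Fin n)) : SlicePoint n p → ℝ := fun x => ∏ i ∈ T, coordR x i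

/-- The space `L_k` of functions of degree at most `k` on the slice. -/
def degLE (n : ℕ) (p : ℝ) (k : ℕ) : Submodule ℝ (SlicePoint n p → ℝ) :=
  Submodule.span ℝ {g | ∃ T : Finset (Fin n), T.card ≤ k ∧ g = andT T}

/-- The space `L_{k-1}` (i.e. spanned by `AND_T` with `|T| < k`). -/
def degLT (n : ℕ) (p : ℝ) (k : ℕ) : Submodule ℝ (SlicePoint n p → ℝ) :=
  Submodule.span ℝ {g | ∃ T : Finset (Fin n), T.card < k ∧ g = andT T}

/-- `fk` is the orthogonal projection `f^{≤ k}` of `f` onto `L_k`. -/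
def IsLowProj (n : ℕ) (p : ℝ) (k : ℕ) (f fk : SlicePoint n p → ℝ) : Prop :=
  fk ∈ degLE n p k ∧ ∀ g ∈ degLE n p k, sInner (f - fk) g = 0

/-- `fk` is the orthogonal projection of `f` onto the span of `AND_T`, `|T| < k`. -/
def IsLowProjLT (n : ℕ) (p : ℝ) (k : ℕ) (f fk : SlicePoint n p → ℝ) : Prop :=
  fk ∈ degLT n p k ∧ ∀ g ∈ degLT n p k, sInner (f - fk) g = 0

/-- `Pr_x [f x ≠ g x]` under the uniform measure on the slice. -/
noncomputable def probNe (f g : SlicePoint n p → ℝ) : ℝ :=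
  sExp (fun x => if f x = g x then 0 else 1)

/-- The action of a permutation on a slice point: `(x^π)_{π i} = x_i`. -/
def permPt (π : Equiv.Perm (Fin n)) (x : SlicePoint n p) : SlicePoint n p :=
  ⟨fun i => x.1 (π.symm i), by
    have h : (Finset.univ.filter (fun i => x.1 (π.symm i) = true)) =
        (Finset.univ.filter (fun i => x.1 i = true)).map π.toEmbedding := by
      ext i
      simp [Finset.mem_map_equiv]
    rw [h, Finset.card_map]
    exact x.2⟩

/-- The derivative operator `D_{ij} f = (f - f^{(ij)})/2`. -/
noncomputable def Dij (i j : Fin n) (f : SlicePoint n p → ℝ) : SlicePoint n p → ℝ :=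
  fun x => (f x - f (permPt (Equiv.swap i j) x)) / 2

/-- The derivative operator `D_P` associated with a set `P` of pairs,
obtained by composing the `D_{ab}` for `(a,b) ∈ P` (these commute for tuples). -/
noncomputable def DP (P : Finset (Fin n × Fin n)) (f : SlicePoint n p → ℝ) :
    SlicePoint n p → ℝ :=
  P.toList.foldr (fun q g => Dij q.1 q.2 g) f

/-- `P` is a `k`-tuple: `k` pairs `(a,b)` with `a < b`, all `2k` entries distinct. -/
def IsTuple {n : ℕ} (k : ℕ) (P : Finset (Fin n × Fin n)) : Prop :=
  P.card = k ∧ (∀ q ∈ P, q.1 < q.2) ∧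
    ∀ q ∈ P, ∀ r ∈ P, q ≠ r →
      q.1 ≠ r.1 ∧ q.1 ≠ r.2 ∧ q.2 ≠ r.1 ∧ q.2 ≠ r.2

/-- `P` is shifted: for every pair `(a,b) ∈ P`, every `a' ≤ a` occurs as an entry of `P`. -/
def IsShifted {n : ℕ} (P : Finset (Fin n × Fin n)) : Prop :=
  ∀ q ∈ P, ∀ a : Fin n, a ≤ q.1 → ∃ r ∈ P, r.1 = a ∨ r.2 = a

/-- `P` is sorted: `a_i < a_j ↔ b_i < b_j`. -/
def IsSorted {n : ℕ} (P : Finset (Fin n × Fin n)) : Prop :=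
  ∀ q ∈ P, ∀ r ∈ P, (q.1 < r.1 ↔ q.2 < r.2)

/-- `Ψ_P (x) = ∏_{(a,b) ∈ P} (x_b - x_a)`. -/
def PsiP (P : Finset (Fin n × Fin n)) : SlicePoint n p → ℝ :=
  fun x => ∏ q ∈ P, (coordR x q.2 - coordR x q.1)

/-- The slice Laplacian `L f = f - (1 / C(n,2)) ∑_{i<j} f^{(ij)}`. -/
noncomputable def sliceLap (f : SlicePoint n p → ℝ) : SlicePoint n p → ℝ :=
  fun x => f x -
    (∑ q ∈ Finset.univ.filter (fun q : Fin n × Fin n => q.1 < q.2),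
      f (permPt (Equiv.swap q.1 q.2) x)) / (n.choose 2 : ℝ)

/-- The noise operator `H_t = exp (-t L) = ∑_l (-t)^l L^l / l!`. -/
noncomputable def Ht (t : ℝ) (f : SlicePoint n p → ℝ) : SlicePoint n p → ℝ :=
  fun x => ∑' l : ℕ, ((-t) ^ l / (l.factorial : ℝ)) * (sliceLap^[l] f) x

/-- The averaging operator `E_I f (x) = E_{Q ∼ S_I} [f (x^Q)]`, averaging over a uniformly
random permutation of the coordinates in `I` (fixing the coordinates outside `I`). -/
noncomputable def avgI (I : Finset (Fin n)) (f : SlicePoint n p → ℝ) : SlicePoint n p → ℝ :=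
  fun x => (∑ σ : {σ : Equiv.Perm (Fin n) // ∀ i ∉ I, σ i = i}, f (permPt σ.1 x)) /
    (Fintype.card {σ : Equiv.Perm (Fin n) // ∀ i ∉ I, σ i = i} : ℝ)

/-- The conditional variance `V_I (f) = ‖f - E_I f‖₂²`. -/
noncomputable def condVar (I : Finset (Fin n)) (f : SlicePoint n p → ℝ) : ℝ :=
  sNormSq (f - avgI I f)

/-- Expectation with respect to the uniform measure on the discrete cube. -/
noncomputable def cExp {n : ℕ} (f : (Fin n → Bool) → ℝ) : ℝ :=
  (∑ x : Fin n → Bool, f x) / (2 ^ n : ℝ)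

/-- The Fourier–Walsh coefficient `f̂ (S) = E_x [f x * χ_S x]`. -/
noncomputable def walshCoeff {n : ℕ} (f : (Fin n → Bool) → ℝ) (S : Finset (Fin n)) : ℝ :=
  cExp (fun x => f x * ∏ i ∈ S, (if x i then (-1 : ℝ) else 1))

/-- The Fourier weight of `f` beyond degree `k`: `W^{>k} (f) = ∑_{|S| > k} f̂(S)²`. -/
noncomputable def WAbove {n : ℕ} (k : ℕ) (f : (Fin n → Bool) → ℝ) : ℝ :=
  ∑ S ∈ Finset.univ.filter (fun S : Finset (Fin n) => k < S.card), walshCoeff f S ^ 2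

/-- `Pr_x [f x ≠ g x]` under the uniform measure on the cube. -/
noncomputable def cProbNe {n : ℕ} (f g : (Fin n → Bool) → ℝ) : ℝ :=
  cExp (fun x => if f x = g x then 0 else 1)

/-- The action of a permutation on a point of the cube: `(x^π)_{π i} = x_i`. -/
def cPerm {n : ℕ} (π : Equiv.Perm (Fin n)) (x : Fin n → Bool) : Fin n → Bool :=
  fun i => x (π.symm i)

/-- The derivative operator on the cube. -/
noncomputable def cDij {n : ℕ} (i j : Fin n) (f : (Fin n → Bool) → ℝ) :
    (Fin n → Bool) → ℝ :=
  fun x => (f x - f (cPerm (Equiv.swap i j) x)) / 2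

/-!
A function on the cube `{0,1}^n` becomes a function on the half slice `S(2(n + t), 1/2)` of the
first `n` coordinates, whose joint law tends to the uniform one as `t → ∞`. Degrees survive in both
directions: a Walsh character of the first coordinates is a polynomial of the same degree on the
slice, and each coordinate of the slice is a function of at most one `x_i` along a copy
`x ↦ (x, (¬x, 1^t, 0^t) ∘ σ)` of the cube. For a uniformly random permutation `σ` this copy
resamples a uniform point of the slice given its first `n` coordinates, so an approximation that is
good on the slice is at least as good on some copy. There are only finitely many Boolean functions
on the cube, so one of them serves for infinitely many `t`, and continuity of `α` gives the bound in
the limit.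
-/

section Walsh

/-- The Walsh character `χ_S(x) = ∏_{i ∈ S} (-1)^{x_i}`. -/
noncomputable def walshChar (S : Finset (Fin n)) (x : Fin n → Bool) : ℝ :=
  ∏ i ∈ S, (if x i then (-1 : ℝ) else 1)

theorem dependsOn_walshChar (S : Finset (Fin n)) : DependsOn (walshChar S) S :=
  fun _ _ h => Finset.prod_congr rfl fun i hi => by rw [h i hi]

theorem walshChar_mul_self (S : Finset (Fin n)) (x : Fin n → Bool) :
    walshChar S x * walshChar S x = 1 := by
  rw [walshChar, ← Finset.prod_mul_distrib]
  exact Finset.prod_eq_one fun i _ => by split_ifs <;> norm_num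

theorem walshChar_update_not {S : Finset (Fin n)} {i : Fin n} (hi : i ∈ S) (x : Fin n → Bool) :
    walshChar S (Function.update x i (!x i)) = -walshChar S x := by
  have off_i : ∏ j ∈ S.erase i, (if Function.update x i (!x i) j then (-1 : ℝ) else 1) =
      ∏ j ∈ S.erase i, (if x j then (-1 : ℝ) else 1) :=
    Finset.prod_congr rfl fun j hj => by rw [Function.update_of_ne (Finset.ne_of_mem_erase hj)]
  rw [walshChar, walshChar, ← Finset.mul_prod_erase _ _ hi, ← Finset.mul_prod_erase S _ hi, off_i]
  cases x i <;> simp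

theorem sum_walshChar_mul_walshChar (x y : Fin n → Bool) :
    ∑ S, walshChar S x * walshChar S y = if x = y then (2 : ℝ) ^ n else 0 := by
  have factor : ∑ S, walshChar S x * walshChar S y =
      ∏ i, (1 + (if x i then (-1 : ℝ) else 1) * (if y i then (-1 : ℝ) else 1)) := by
    simp only [Finset.prod_one_add, walshChar, Finset.prod_mul_distrib, Finset.powerset_univ]
  rw [factor]
  split_ifs with hxy
  · subst hxy
    rw [Finset.prod_congr rfl (g := fun _ => (2 : ℝ)) fun i _ => by split_ifs <;> norm_num]
    simp
  · obtain ⟨i, hi⟩ := Function.ne_iff.1 hxy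
    apply Finset.prod_eq_zero (Finset.mem_univ i)
    cases hx : x i <;> cases hy : y i <;> simp_all

/-- The Fourier–Walsh coefficient at `S` as a linear functional. -/
noncomputable def walshCoeffₗ (S : Finset (Fin n)) : ((Fin n → Bool) → ℝ) →ₗ[ℝ] ℝ where
  toFun f := walshCoeff f S
  map_add' f g := by
    simp only [walshCoeff, cExp, Pi.add_apply, add_mul, Finset.sum_add_distrib, add_div]
  map_smul' a f := by
    simp only [walshCoeff, cExp, Pi.smul_apply, smul_eq_mul, mul_assoc, ← Finset.mul_sum,
      mul_div_assoc, RingHom.id_apply]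

theorem walshCoeffₗ_apply (S : Finset (Fin n)) (f : (Fin n → Bool) → ℝ) :
    walshCoeffₗ S f = walshCoeff f S := rfl

theorem walshCoeff_eq_zero_of_dependsOn {f : (Fin n → Bool) → ℝ} {J S : Finset (Fin n)}
    (hf : DependsOn f J) (hS : ¬S ⊆ J) : walshCoeff f S = 0 := by
  obtain ⟨i, hiS, hiJ⟩ := Finset.not_subset.1 hS
  have flip_involutive :
      Function.Involutive fun x : Fin n → Bool => Function.update x i (!x i) := by
    intro x; simp
  have f_flip (x : Fin n → Bool) : f (Function.update x i (!x i)) = f x :=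
    hf fun j hj => Function.update_of_ne (fun hji => hiJ (by simpa [hji] using hj)) _ _
  have sum_eq_neg : ∑ x, f x * walshChar S x = -∑ x, f x * walshChar S x := by
    rw [← Finset.sum_neg_distrib, ← Equiv.sum_comp flip_involutive.toPerm]
    refine Finset.sum_congr rfl fun x _ => ?_
    rw [Function.Involutive.coe_toPerm, f_flip, walshChar_update_not hiS, mul_neg]
  change (∑ x, f x * walshChar S x) / 2 ^ n = 0
  rw [self_eq_neg.1 sum_eq_neg, zero_div]

theorem walshCoeff_walshChar (S T : Finset (Fin n)) :
    walshCoeff (walshChar T) S = if S = T then 1 else 0 := by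
  split_ifs with hST
  · subst hST
    change (∑ x, walshChar S x * walshChar S x) / 2 ^ n = 1
    simp [walshChar_mul_self]
  · by_cases hsub : S ⊆ T
    · have swap : walshCoeff (walshChar T) S = walshCoeff (walshChar S) T :=
        congrArg cExp (funext fun x => mul_comm _ _)
      rw [swap]
      exact walshCoeff_eq_zero_of_dependsOn (dependsOn_walshChar S)
        fun hsup => hST (hsub.antisymm hsup)
    · exact walshCoeff_eq_zero_of_dependsOn (dependsOn_walshChar T) hsub

theorem eq_sum_walshCoeff_smul_walshChar (f : (Fin n → Bool) → ℝ) :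
    f = ∑ S, walshCoeff f S • walshChar S := by
  ext x
  symm
  calc (∑ S, walshCoeff f S • walshChar S) x
      = ∑ S, (∑ y, f y * walshChar S y) / 2 ^ n * walshChar S x := by
        simp only [Finset.sum_apply, Pi.smul_apply, smul_eq_mul]
        rfl
    _ = (∑ y, f y * ∑ S, walshChar S y * walshChar S x) / 2 ^ n := by
        simp only [div_mul_eq_mul_div, Finset.sum_mul, Finset.mul_sum, mul_assoc]
        rw [← Finset.sum_div, Finset.sum_comm]
    _ = f x := by simp [sum_walshChar_mul_walshChar]

theorem cExp_sq_eq_sum_walshCoeff_sq (f : (Fin n → Bool) → ℝ) :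
    cExp (fun x => f x ^ 2) = ∑ S, walshCoeff f S ^ 2 := by
  calc cExp (fun x => f x ^ 2)
      = (∑ x, ∑ S, walshCoeff f S * (f x * walshChar S x)) / 2 ^ n := by
        refine congrArg (· / _) (Finset.sum_congr rfl fun x _ => ?_)
        have expand := congrFun (eq_sum_walshCoeff_smul_walshChar f) x
        simp only [Finset.sum_apply, Pi.smul_apply, smul_eq_mul] at expand
        change f x ^ 2 = _
        rw [sq]
        nth_rw 2 [expand]
        rw [Finset.mul_sum]
        exact Finset.sum_congr rfl fun S _ => mul_left_comm _ _ _
    _ = ∑ S, walshCoeff f S * ((∑ x, f x * walshChar S x) / 2 ^ n) := by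
        rw [Finset.sum_comm, Finset.sum_div]
        simp only [← Finset.mul_sum, mul_div_assoc]
    _ = ∑ S, walshCoeff f S ^ 2 := Finset.sum_congr rfl fun S _ => (sq _).symm

/-- The functions of degree at most `k` on the cube: those whose Walsh coefficients vanish on all
sets of more than `k` coordinates. It is the cube analogue of `degLE`. -/
noncomputable def cubeDegLE (n k : ℕ) : Submodule ℝ ((Fin n → Bool) → ℝ) :=
  ⨅ (S : Finset (Fin n)) (_ : k < #S), LinearMap.ker (walshCoeffₗ S)

theorem mem_cubeDegLE {k : ℕ} {f : (Fin n → Bool) → ℝ} :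
    f ∈ cubeDegLE n k ↔ ∀ S : Finset (Fin n), k < #S → walshCoeff f S = 0 := by
  simp only [cubeDegLE, Submodule.mem_iInf, LinearMap.mem_ker, walshCoeffₗ_apply]

theorem mem_cubeDegLE_of_dependsOn {k : ℕ} {f : (Fin n → Bool) → ℝ} {J : Finset (Fin n)}
    (hf : DependsOn f J) (hJ : #J ≤ k) : f ∈ cubeDegLE n k :=
  mem_cubeDegLE.2 fun _ hS =>
    walshCoeff_eq_zero_of_dependsOn hf fun hSJ => by have := Finset.card_le_card hSJ; omega

/-- The truncation `f^{≤ k}` of the Fourier–Walsh expansion of `f`, which is the orthogonal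
projection of `f` onto `cubeDegLE n k`. -/
noncomputable def walshTrunc (k : ℕ) (f : (Fin n → Bool) → ℝ) : (Fin n → Bool) → ℝ :=
  ∑ S with #S ≤ k, walshCoeff f S • walshChar S

theorem walshCoeff_walshTrunc (k : ℕ) (f : (Fin n → Bool) → ℝ) (S : Finset (Fin n)) :
    walshCoeff (walshTrunc k f) S = if #S ≤ k then walshCoeff f S else 0 := by
  rw [← walshCoeffₗ_apply, walshTrunc, map_sum]
  simp only [map_smul, walshCoeffₗ_apply, walshCoeff_walshChar, smul_eq_mul, mul_ite, mul_one,
    mul_zero, Finset.sum_ite_eq, Finset.mem_filter, Finset.mem_univ, true_and]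

theorem walshTrunc_mem_cubeDegLE (k : ℕ) (f : (Fin n → Bool) → ℝ) :
    walshTrunc k f ∈ cubeDegLE n k :=
  mem_cubeDegLE.2 fun S hS => by rw [walshCoeff_walshTrunc, if_neg hS.not_ge]

theorem cExp_sub_walshTrunc_sq (k : ℕ) (f : (Fin n → Bool) → ℝ) :
    cExp (fun x => (f x - walshTrunc k f x) ^ 2) = WAbove k f := by
  have coeff (S : Finset (Fin n)) :
      walshCoeff (f - walshTrunc k f) S = if k < #S then walshCoeff f S else 0 := by
    rw [← walshCoeffₗ_apply, map_sub, walshCoeffₗ_apply, walshCoeffₗ_apply, walshCoeff_walshTrunc]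
    by_cases hS : k < #S
    · rw [if_neg hS.not_ge, if_pos hS, sub_zero]
    · rw [if_pos (not_lt.1 hS), if_neg hS, sub_self]
  calc cExp (fun x => (f x - walshTrunc k f x) ^ 2)
      = ∑ S, walshCoeff (f - walshTrunc k f) S ^ 2 :=
        cExp_sq_eq_sum_walshCoeff_sq (f - walshTrunc k f)
    _ = WAbove k f := by
        simp only [coeff, WAbove, Finset.sum_filter, ite_pow, ne_eq, OfNat.ofNat_ne_zero,
          not_false_eq_true, zero_pow]

end Walsh

section Slice

theorem sNormSq_nonneg (f : SlicePoint n p → ℝ) : 0 ≤ sNormSq f :=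
  div_nonneg (Finset.sum_nonneg fun _ _ => mul_self_nonneg _) (Nat.cast_nonneg _)

theorem sNormSq_le_one {f : SlicePoint n p → ℝ} (hf : ∀ x, f x = 0 ∨ f x = 1) :
    sNormSq f ≤ 1 := by
  refine div_le_one_of_le₀ ?_ (Nat.cast_nonneg _)
  calc ∑ x, f x * f x ≤ ∑ _x : SlicePoint n p, (1 : ℝ) :=
        Finset.sum_le_sum fun x _ => by rcases hf x with h | h <;> simp [h]
    _ = Fintype.card (SlicePoint n p) := by simp

theorem exists_isLowProj (k : ℕ) (f : SlicePoint n p → ℝ) : ∃ fk, IsLowProj n p k f fk := by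
  let e := WithLp.linearEquiv 2 ℝ (SlicePoint n p → ℝ)
  obtain ⟨y, hy, z, hz, hyz⟩ :=
    ((degLE n p k).comap e.toLinearMap).exists_add_mem_mem_orthogonal (e.symm f)
  refine ⟨e y, hy, fun g hg => ?_⟩
  have residual : f - e y = e z := by
    rw [sub_eq_iff_eq_add', ← map_add, ← hyz, LinearEquiv.apply_symm_apply]
  have orthogonal : ∑ x, e z x * g x = 0 := by
    rw [← hz (e.symm g) (by simpa using hg), PiLp.inner_apply]
    rfl
  rw [residual, sInner, sExp, orthogonal, zero_div]

theorem IsLowProj.sNormSq_sub_le {k : ℕ} {f fk g : SlicePoint n p → ℝ}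
    (h : IsLowProj n p k f fk) (hg : g ∈ degLE n p k) : sNormSq (f - fk) ≤ sNormSq (f - g) := by
  have cross : sInner (f - fk) (fk - g) = 0 := h.2 _ (Submodule.sub_mem _ h.1 hg)
  have pythagoras :
      sNormSq (f - g) = sNormSq (f - fk) + 2 * sInner (f - fk) (fk - g) + sNormSq (fk - g) := by
    simp only [sNormSq, sInner, sExp, ← mul_div_assoc, ← add_div, Finset.mul_sum,
      ← Finset.sum_add_distrib, Pi.sub_apply]
    exact congrArg (· / _) (Finset.sum_congr rfl fun x _ => by ring)
  linarith [sNormSq_nonneg (fk - g)]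

theorem comp_mem_cubeDegLE {m k : ℕ} {g : SlicePoint m p → ℝ} (hg : g ∈ degLE m p k)
    {P : (Fin n → Bool) → SlicePoint m p}
    (hP : ∀ i, ∃ J : Finset (Fin n), #J ≤ 1 ∧ DependsOn (fun x => (P x).1 i) J) :
    g ∘ P ∈ cubeDegLE n k := by
  choose J hJcard hJ using hP
  suffices degLE m p k ≤ (cubeDegLE n k).comap (LinearMap.funLeft ℝ ℝ P) from this hg
  refine Submodule.span_le.2 ?_
  rintro _ ⟨T, hT, rfl⟩
  have junta : DependsOn (andT T ∘ P) (T.biUnion J : Finset (Fin n)) := fun x y h =>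
    Finset.prod_congr rfl fun i hi => by
      have agree : (P x).1 i = (P y).1 i :=
        hJ i fun j hj => h j (Finset.mem_biUnion.2 ⟨i, hi, hj⟩)
      rw [coordR, coordR, agree]
  refine mem_cubeDegLE_of_dependsOn junta ?_
  calc #(T.biUnion J) ≤ #T * 1 := Finset.card_biUnion_le_card_mul T J 1 fun i _ => hJcard i
    _ ≤ k := by rwa [mul_one]

/-- The first `n` coordinates of a point of a slice of dimension `n + N`. -/
def slicePrefix {N : ℕ} (y : SlicePoint (n + N) p) : Fin n → Bool :=
  fun i => y.1 (Fin.castAdd N i)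

theorem walshChar_comp_slicePrefix_mem_degLE {N k : ℕ} {S : Finset (Fin n)} (hS : #S ≤ k) :
    walshChar S ∘ slicePrefix ∈ degLE (n + N) p k := by
  have expand : (walshChar S ∘ slicePrefix : SlicePoint (n + N) p → ℝ) =
      ∑ T ∈ S.powerset, (-2 : ℝ) ^ #T • andT (T.map (Fin.castAddEmb N)) := by
    ext y
    have sign (i : Fin n) :
        (if slicePrefix y i then (-1 : ℝ) else 1) = 1 + -2 * coordR y (Fin.castAdd N i) := by
      rw [slicePrefix, coordR]
      split_ifs <;> norm_num
    simp only [Function.comp_apply, walshChar, sign, Finset.prod_one_add, Finset.prod_mul_distrib,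
      Finset.prod_const, Finset.sum_apply, Pi.smul_apply, smul_eq_mul, andT, Finset.prod_map]
    rfl
  rw [expand]
  refine Submodule.sum_mem _ fun T hT => Submodule.smul_mem _ _ (Submodule.subset_span ⟨_, ?_, rfl⟩)
  rw [Finset.card_map]
  exact (Finset.card_le_card (Finset.mem_powerset.1 hT)).trans hS

theorem comp_slicePrefix_mem_degLE {N k : ℕ} {f : (Fin n → Bool) → ℝ} (hf : f ∈ cubeDegLE n k) :
    f ∘ slicePrefix ∈ degLE (n + N) p k := by
  suffices ∑ S, walshCoeff f S • walshChar S ∈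
      (degLE (n + N) p k).comap (LinearMap.funLeft ℝ ℝ slicePrefix) by
    rwa [← eq_sum_walshCoeff_smul_walshChar f] at this
  refine Submodule.sum_mem _ fun S _ => ?_
  by_cases hS : #S ≤ k
  · exact Submodule.smul_mem _ _ (walshChar_comp_slicePrefix_mem_degLE hS)
  · rw [mem_cubeDegLE.1 hf S (not_le.1 hS), zero_smul]
    exact Submodule.zero_mem _

theorem exists_isLowProj_comp_slicePrefix {N : ℕ} (k : ℕ) {f : (Fin n → Bool) → ℝ}
    (hf : ∀ x, f x = 0 ∨ f x = 1) :
    ∃ fk, IsLowProj (n + N) p k (f ∘ slicePrefix) fk ∧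
      sNormSq (f ∘ slicePrefix - fk) ≤
        min 1 (sExp fun y : SlicePoint (n + N) p =>
          (f (slicePrefix y) - walshTrunc k f (slicePrefix y)) ^ 2) := by
  obtain ⟨fk, hfk⟩ := exists_isLowProj k (f ∘ slicePrefix : SlicePoint (n + N) p → ℝ)
  refine ⟨fk, hfk, le_min ?_ ?_⟩
  · calc sNormSq (f ∘ slicePrefix - fk)
        ≤ sNormSq (f ∘ slicePrefix - 0) := hfk.sNormSq_sub_le (Submodule.zero_mem _)
      _ ≤ 1 := by rw [sub_zero]; exact sNormSq_le_one fun y => hf (slicePrefix y)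
  · calc sNormSq (f ∘ slicePrefix - fk)
        ≤ sNormSq (f ∘ slicePrefix - walshTrunc k f ∘ slicePrefix) :=
          hfk.sNormSq_sub_le (comp_slicePrefix_mem_degLE (walshTrunc_mem_cubeDegLE k f))
      _ = _ := congrArg sExp (funext fun y => (sq _).symm)

end Slice

section Weight

variable {ι : Type*} [Fintype ι]

/-- The Hamming weight of a Boolean vector, i.e. its number of ones. -/
def boolWeight (x : ι → Bool) : ℕ := #{i | x i = true}

theorem boolWeight_eq_sum (x : ι → Bool) : boolWeight x = ∑ i, if x i = true then 1 else 0 :=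
  Finset.card_filter _ _

theorem boolWeight_append {a b : ℕ} (x : Fin a → Bool) (w : Fin b → Bool) :
    boolWeight (Fin.append x w) = boolWeight x + boolWeight w := by
  simp only [boolWeight_eq_sum, Fin.sum_univ_add, Fin.append_left, Fin.append_right]

theorem boolWeight_add_boolWeight_not (x : ι → Bool) :
    boolWeight x + boolWeight (fun i => !x i) = Fintype.card ι := by
  simp only [boolWeight, Bool.not_eq_true', ← Bool.not_eq_true]
  exact Finset.card_filter_add_card_filter_not _

theorem boolWeight_comp_perm (x : ι → Bool) (σ : Equiv.Perm ι) :
    boolWeight (x ∘ σ) = boolWeight x := by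
  simp only [boolWeight_eq_sum]
  exact Equiv.sum_comp σ fun i => if x i = true then 1 else 0

theorem exists_perm_comp_eq_of_boolWeight_eq {x y : ι → Bool} (h : boolWeight x = boolWeight y) :
    ∃ σ : Equiv.Perm ι, y = x ∘ σ := by
  have card_eq : Fintype.card {i // y i = true} = Fintype.card {i // x i = true} := by
    rw [Fintype.card_subtype, Fintype.card_subtype]
    exact h.symm
  let e := Fintype.equivOfCardEq card_eq
  refine ⟨e.extendSubtype, funext fun i => ?_⟩
  by_cases hi : y i = true
  · exact hi.trans (e.extendSubtype_mem i hi).symm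
  · exact (Bool.not_eq_true _ ▸ hi).trans (Bool.not_eq_true _ ▸ e.extendSubtype_not_mem i hi).symm

variable [DecidableEq ι]

variable (ι) in
theorem card_boolWeight_eq (a : ℕ) :
    #{w : ι → Bool | boolWeight w = a} = (Fintype.card ι).choose a := by
  rw [← Finset.card_univ, ← Finset.card_powersetCard]
  refine Finset.card_nbij' (fun w => ({i | w i = true} : Finset ι)) (fun s i => decide (i ∈ s))
    ?_ ?_ ?_ ?_
  · intro w hw
    rw [Finset.mem_coe, Finset.mem_filter] at hw
    simpa [boolWeight, Finset.mem_powersetCard] using hw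
  · intro s hs
    rw [Finset.mem_coe, Finset.mem_filter]
    simpa [boolWeight, Finset.mem_powersetCard] using hs
  · intro w _
    ext i; simp
  · intro s _
    ext i; simp

/-- A uniformly random permutation of `w₀` is uniform among the vectors of the same weight. -/
theorem card_mul_sum_comp_perm (v : (ι → Bool) → ℝ) (w₀ : ι → Bool) :
    (#{w : ι → Bool | boolWeight w = boolWeight w₀} : ℝ) * ∑ σ : Equiv.Perm ι, v (w₀ ∘ σ) =
      Fintype.card (Equiv.Perm ι) * ∑ w with boolWeight w = boolWeight w₀, v w := by
  have orbit_sum_eq (w : ι → Bool) (hw : boolWeight w = boolWeight w₀) :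
      ∑ σ : Equiv.Perm ι, v (w ∘ σ) = ∑ σ : Equiv.Perm ι, v (w₀ ∘ σ) := by
    obtain ⟨τ, rfl⟩ := exists_perm_comp_eq_of_boolWeight_eq hw.symm
    exact Equiv.sum_comp (Equiv.mulLeft τ) fun σ => v (w₀ ∘ σ)
  have layer_sum_eq (σ : Equiv.Perm ι) :
      ∑ w with boolWeight w = boolWeight w₀, v (w ∘ σ) =
        ∑ w with boolWeight w = boolWeight w₀, v w :=
    Finset.sum_nbij' (· ∘ σ) (· ∘ σ.symm)
      (fun w hw => by simpa [boolWeight_comp_perm] using hw)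
      (fun w hw => by simpa [boolWeight_comp_perm] using hw)
      (fun w _ => by ext; simp) (fun w _ => by ext; simp) fun w _ => rfl
  calc (#{w : ι → Bool | boolWeight w = boolWeight w₀} : ℝ) * ∑ σ : Equiv.Perm ι, v (w₀ ∘ σ)
      = ∑ w with boolWeight w = boolWeight w₀, ∑ σ : Equiv.Perm ι, v (w ∘ σ) := by
        rw [Finset.sum_congr rfl fun w hw => orbit_sum_eq w (Finset.mem_filter.1 hw).2,
          Finset.sum_const, nsmul_eq_mul]
    _ = Fintype.card (Equiv.Perm ι) * ∑ w with boolWeight w = boolWeight w₀, v w := by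
        rw [Finset.sum_comm, Finset.sum_congr rfl fun σ _ => layer_sum_eq σ, Finset.sum_const,
          Finset.card_univ, nsmul_eq_mul]

end Weight

section PaddedSlice

variable {t : ℕ}

/-- The half slice `S(2(n + t), 1/2)`, its coordinates grouped as `n + (n + (t + t))`: a point of
the `n`-cube followed by as many coordinates to complement it and `2t` padding coordinates. -/
abbrev PaddedSlice (n t : ℕ) : Type := SlicePoint (n + (n + (t + t))) (1 / 2)

/-- The completion `(¬x, 1^t, 0^t)` that makes `(x, completion t x)` a point of the half slice. -/
def completion (t : ℕ) (x : Fin n → Bool) : Fin (n + (t + t)) → Bool :=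
  Fin.append (fun i => !x i) (Fin.append (fun _ : Fin t => true) (fun _ : Fin t => false))

theorem boolWeight_add_boolWeight_completion (t : ℕ) (x : Fin n → Bool) :
    boolWeight x + boolWeight (completion t x) = n + t := by
  have ones : boolWeight (fun _ : Fin t => true) = t := by simp [boolWeight]
  have zeros : boolWeight (fun _ : Fin t => false) = 0 := by simp [boolWeight]
  rw [completion, boolWeight_append, boolWeight_append, ones, zeros, ← add_assoc,
    boolWeight_add_boolWeight_not, Fintype.card_fin, add_zero]

theorem mem_paddedSlice_iff {y : Fin (n + (n + (t + t))) → Bool} :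
    (#{i | y i = true} : ℝ) = 1 / 2 * (n + (n + (t + t)) : ℕ) ↔ boolWeight y = n + t := by
  rw [← Nat.cast_inj (R := ℝ), boolWeight]
  push_cast
  constructor <;> intro h <;> linarith

theorem card_boolWeight_eq_completion (t : ℕ) (x : Fin n → Bool) :
    #{w : Fin (n + (t + t)) → Bool | boolWeight w = boolWeight (completion t x)} =
      (n + (t + t)).choose (t + boolWeight x) := by
  rw [card_boolWeight_eq, Fintype.card_fin]
  refine Nat.choose_symm_of_eq_add ?_
  have := boolWeight_add_boolWeight_completion t x
  omega

theorem sum_paddedSlice (u : (Fin (n + (n + (t + t))) → Bool) → ℝ) :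
    ∑ y : PaddedSlice n t, u y.1 =
      ∑ x : Fin n → Bool, ∑ w with boolWeight w = boolWeight (completion t x),
        u (Fin.append x w) := by
  have split_iff (x : Fin n → Bool) (w : Fin (n + (t + t)) → Bool) :
      boolWeight (Fin.append x w) = n + t ↔ boolWeight w = boolWeight (completion t x) := by
    rw [boolWeight_append, ← boolWeight_add_boolWeight_completion t x, add_right_inj]
  calc ∑ y : PaddedSlice n t, u y.1 = ∑ y with boolWeight y = n + t, u y :=
        (Finset.sum_subtype _ (fun y => by rw [mem_paddedSlice_iff]; simp) u).symm
    _ = _ := by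
        rw [Finset.sum_filter, ← Equiv.sum_comp (Fin.appendEquiv n (n + (t + t))),
          Fintype.sum_prod_type]
        simp only [Fin.appendEquiv, Equiv.coe_fn_mk, split_iff, Finset.sum_filter]

theorem sum_comp_slicePrefix (u : (Fin n → Bool) → ℝ) :
    ∑ y : PaddedSlice n t, u (slicePrefix y) =
      ∑ x, ((n + (t + t)).choose (t + boolWeight x) : ℝ) * u x := by
  rw [show ∑ y : PaddedSlice n t, u (slicePrefix y) = _ from
    sum_paddedSlice fun y => u fun i => y (Fin.castAdd _ i)]
  simp only [Fin.append_left, Finset.sum_const, card_boolWeight_eq_completion, nsmul_eq_mul]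

theorem sExp_comp_slicePrefix (u : (Fin n → Bool) → ℝ) :
    sExp (fun y : PaddedSlice n t => u (slicePrefix y)) =
      (∑ x, ((n + (t + t)).choose (t + boolWeight x) : ℝ) * u x) /
        ∑ x : Fin n → Bool, ((n + (t + t)).choose (t + boolWeight x) : ℝ) := by
  have card_eq : (Fintype.card (PaddedSlice n t) : ℝ) =
      ∑ x : Fin n → Bool, ((n + (t + t)).choose (t + boolWeight x) : ℝ) := by
    simpa using sum_comp_slicePrefix (n := n) (t := t) fun _ => 1
  rw [sExp, sum_comp_slicePrefix, card_eq]

/-- The copy `x ↦ (x, completion t x ∘ σ)` of the cube inside the half slice. -/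
def subcube (σ : Equiv.Perm (Fin (n + (t + t)))) (x : Fin n → Bool) : PaddedSlice n t :=
  ⟨Fin.append x (completion t x ∘ σ), by
    rw [mem_paddedSlice_iff, boolWeight_append, boolWeight_comp_perm,
      boolWeight_add_boolWeight_completion]⟩

theorem slicePrefix_subcube (σ : Equiv.Perm (Fin (n + (t + t)))) (x : Fin n → Bool) :
    slicePrefix (subcube σ x) = x :=
  funext fun i => Fin.append_left _ _ i

theorem exists_dependsOn_completion (t : ℕ) (i : Fin (n + (t + t))) :
    ∃ J : Finset (Fin n), #J ≤ 1 ∧ DependsOn (fun x => completion t x i) J := by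
  refine Fin.addCases (fun j => ?_) (fun j => ?_) i
  · exact ⟨{j}, by simp, fun x y h => by simp [completion, h j]⟩
  · exact ⟨∅, by simp, fun x y _ => by simp [completion]⟩

theorem comp_subcube_mem_cubeDegLE {k : ℕ} (σ : Equiv.Perm (Fin (n + (t + t))))
    {g : PaddedSlice n t → ℝ} (hg : g ∈ degLE _ _ k) : g ∘ subcube σ ∈ cubeDegLE n k := by
  refine comp_mem_cubeDegLE hg fun i => Fin.addCases (fun j => ?_) (fun j => ?_) i
  · exact ⟨{j}, by simp, fun x y h => by simp [subcube, h j]⟩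
  · simpa only [subcube, Fin.append_right, Function.comp_apply] using
      exists_dependsOn_completion t (σ j)

/-- Averaged over `σ`, moving a uniform point `y` of the slice to the point of `subcube σ` with the
same prefix leaves the uniform measure invariant. -/
theorem sum_sExp_comp_subcube_slicePrefix (u : PaddedSlice n t → ℝ) :
    ∑ σ : Equiv.Perm (Fin (n + (t + t))),
        sExp (fun y : PaddedSlice n t => u (subcube σ (slicePrefix y))) =
      Fintype.card (Equiv.Perm (Fin (n + (t + t)))) * sExp u := by
  obtain ⟨U, rfl⟩ : ∃ U : (Fin (n + (n + (t + t))) → Bool) → ℝ, (fun y => U y.1) = u :=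
    Subtype.val_injective.surjective_comp_right u
  have resample (x : Fin n → Bool) :
      ((n + (t + t)).choose (t + boolWeight x) : ℝ) *
          ∑ σ : Equiv.Perm (Fin (n + (t + t))), U (subcube σ x).1 =
        Fintype.card (Equiv.Perm (Fin (n + (t + t)))) *
          ∑ w with boolWeight w = boolWeight (completion t x), U (Fin.append x w) := by
    rw [← card_boolWeight_eq_completion]
    exact card_mul_sum_comp_perm (fun w => U (Fin.append x w)) (completion t x)
  simp only [sExp, ← Finset.sum_div, ← mul_div_assoc]
  congr 1
  calc ∑ σ : Equiv.Perm (Fin (n + (t + t))), ∑ y : PaddedSlice n t, U (subcube σ (slicePrefix y)).1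
      = ∑ x, ((n + (t + t)).choose (t + boolWeight x) : ℝ) *
          ∑ σ : Equiv.Perm (Fin (n + (t + t))), U (subcube σ x).1 := by
        rw [Finset.sum_congr rfl fun σ _ => sum_comp_slicePrefix fun x => U (subcube σ x).1,
          Finset.sum_comm]
        simp only [Finset.mul_sum]
    _ = Fintype.card (Equiv.Perm (Fin (n + (t + t)))) * ∑ y : PaddedSlice n t, U y.1 := by
        rw [sum_paddedSlice, Finset.mul_sum, Finset.sum_congr rfl fun x _ => resample x]

theorem exists_sExp_comp_subcube_slicePrefix_le (u : PaddedSlice n t → ℝ) :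
    ∃ σ : Equiv.Perm (Fin (n + (t + t))),
      sExp (fun y : PaddedSlice n t => u (subcube σ (slicePrefix y))) ≤ sExp u := by
  obtain ⟨σ, -, hσ⟩ := Finset.exists_le_of_sum_le Finset.univ_nonempty
    (f := fun σ : Equiv.Perm (Fin (n + (t + t))) =>
      sExp fun y : PaddedSlice n t => u (subcube σ (slicePrefix y)))
    (g := fun _ => sExp u)
    (by rw [sum_sExp_comp_subcube_slicePrefix, Finset.sum_const, Finset.card_univ, nsmul_eq_mul])
  exact ⟨σ, hσ⟩

theorem exists_subcube_probNe_le (f : (Fin n → Bool) → ℝ) (g' : PaddedSlice n t → ℝ) :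
    ∃ σ, probNe (f ∘ slicePrefix) ((g' ∘ subcube σ) ∘ slicePrefix : PaddedSlice n t → ℝ) ≤
      probNe (f ∘ slicePrefix) g' := by
  obtain ⟨σ, hσ⟩ := exists_sExp_comp_subcube_slicePrefix_le
    fun y : PaddedSlice n t => if f (slicePrefix y) = g' y then 0 else 1
  simp only [slicePrefix_subcube] at hσ
  exact ⟨σ, hσ⟩

end PaddedSlice

section Limit

open Filter Topology

theorem tendsto_choose_div_choose (n j : ℕ) :
    Tendsto (fun t : ℕ => ((n + (t + t)).choose (t + j) : ℝ) / (n + (t + t)).choose t)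
      atTop (𝓝 1) := by
  induction j with
  | zero =>
    refine tendsto_const_nhds.congr fun t => (div_self ?_).symm
    exact_mod_cast (Nat.choose_pos (by omega : t ≤ n + (t + t))).ne'
  | succ j ih =>
    have ratio_lim : Tendsto (fun t : ℕ => ((n - j : ℝ) + t) / ((j + 1 : ℝ) + t)) atTop (𝓝 1) := by
      simpa using tendsto_add_mul_div_add_mul_atTop_nhds (𝕜 := ℝ) (n - j) (j + 1) 1 one_ne_zero
    rw [← one_mul (1 : ℝ)]
    refine (ih.mul ratio_lim).congr' ?_
    filter_upwards [eventually_ge_atTop j] with t hjt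
    have recurrence : ((n + (t + t)).choose (t + j) : ℝ) * ((n - j : ℝ) + t) =
        (n + (t + t)).choose (t + (j + 1)) * ((j + 1 : ℝ) + t) := by
      have choose_succ := Nat.choose_succ_right_eq (n + (t + t)) (t + j)
      rw [show n + (t + t) - (t + j) = n + (t - j) by omega] at choose_succ
      have := congrArg (Nat.cast (R := ℝ)) choose_succ
      push_cast [Nat.cast_sub hjt] at this
      linear_combination -this
    rw [div_mul_div_comm, recurrence, mul_div_mul_right _ _ (by positivity)]

theorem tendsto_sExp_comp_slicePrefix (u : (Fin n → Bool) → ℝ) :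
    Tendsto (fun t => sExp fun y : PaddedSlice n t => u (slicePrefix y)) atTop
      (𝓝 (cExp u)) := by
  have ratio (x : Fin n → Bool) := tendsto_choose_div_choose n (boolWeight x)
  have num := tendsto_finsetSum Finset.univ fun x _ => (ratio x).mul_const (u x)
  have den := tendsto_finsetSum Finset.univ fun x _ => ratio x
  have lim := num.div den (by simp)
  have lim_eq : (∑ x, 1 * u x) / ∑ _x : Fin n → Bool, (1 : ℝ) = cExp u := by simp [cExp]
  rw [lim_eq] at lim
  refine lim.congr fun t => ?_
  have choose_pos : (0 : ℝ) < (n + (t + t)).choose t := by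
    exact_mod_cast Nat.choose_pos (by omega)
  simp only [Pi.div_apply, div_mul_eq_mul_div]
  rw [← Finset.sum_div, ← Finset.sum_div, div_div_div_cancel_right₀ choose_pos.ne',
    sExp_comp_slicePrefix]

theorem exists_mem_le_of_tendsto_of_frequently {β ι γ : Type*} [TopologicalSpace γ] [Preorder γ]
    [OrderClosedTopology γ] {l : Filter ι} {s : Set β} (hs : s.Finite) {F : ι → β → γ} {F₀ : β → γ}
    {a : ι → γ} {a₀ : γ} (hF : ∀ b ∈ s, Tendsto (F · b) l (𝓝 (F₀ b))) (ha : Tendsto a l (𝓝 a₀))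
    (h : ∃ᶠ i in l, ∃ b ∈ s, F i b ≤ a i) : ∃ b ∈ s, F₀ b ≤ a₀ := by
  obtain ⟨b, hb, hfreq⟩ : ∃ b ∈ s, ∃ᶠ i in l, F i b ≤ a i := by
    contrapose! h
    simpa using (eventually_all_finite hs).2 fun b hb => h b hb
  exact ⟨b, hb, le_of_tendsto_of_tendsto_of_frequently (hF b hb) ha hfreq⟩

end Limit

section Reduction

open Filter Topology

theorem exists_mem_cubeDegLE_probNe_comp_slicePrefix_le {t k : ℕ} {δ a : ℝ}
    (H : ∀ f' : PaddedSlice n t → ℝ, (∀ y, f' y = 0 ∨ f' y = 1) →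
      (∃ fk, IsLowProj _ _ k f' fk ∧ sNormSq (f' - fk) ≤ δ) →
      ∃ g' : PaddedSlice n t → ℝ, (∀ y, g' y = 0 ∨ g' y = 1) ∧ g' ∈ degLE _ _ k ∧ probNe f' g' ≤ a)
    {f : (Fin n → Bool) → ℝ} (hf : ∀ x, f x = 0 ∨ f x = 1)
    (hδ : min 1 (sExp fun y : PaddedSlice n t =>
      (f (slicePrefix y) - walshTrunc k f (slicePrefix y)) ^ 2) ≤ δ) :
    ∃ g : (Fin n → Bool) → ℝ, ((∀ x, g x = 0 ∨ g x = 1) ∧ g ∈ cubeDegLE n k) ∧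
      probNe (f ∘ slicePrefix) (g ∘ slicePrefix : PaddedSlice n t → ℝ) ≤ a := by
  obtain ⟨fk, hfk, hfk_le⟩ := exists_isLowProj_comp_slicePrefix (p := 1 / 2) k hf
  obtain ⟨g', hg', hg'_deg, hg'_close⟩ :=
    H (f ∘ slicePrefix) (fun y => hf (slicePrefix y)) ⟨fk, hfk, hfk_le.trans hδ⟩
  obtain ⟨σ, hσ⟩ := exists_subcube_probNe_le f g'
  exact ⟨g' ∘ subcube σ, ⟨fun x => hg' _, comp_subcube_mem_cubeDegLE σ hg'_deg⟩,
    hσ.trans hg'_close⟩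

theorem finite_boolean_cubeDegLE (n k : ℕ) :
    {g : (Fin n → Bool) → ℝ | (∀ x, g x = 0 ∨ g x = 1) ∧ g ∈ cubeDegLE n k}.Finite :=
  (Set.Finite.pi' fun _ => Set.toFinite {0, 1}).subset fun _ hg => hg.1

theorem ks_reduction_general (k : ℕ) (α : ℝ → ℝ)
    (H : ∀ m : ℕ, Even m → ∀ ε' ∈ Set.Icc (0 : ℝ) 1,
      ∀ f' : SlicePoint m (1 / 2) → ℝ, (∀ x, f' x = 0 ∨ f' x = 1) →
        (∃ fk, IsLowProj m (1 / 2) k f' fk ∧ sNormSq (f' - fk) ≤ ε') →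
        ∃ g' : SlicePoint m (1 / 2) → ℝ,
          (∀ x, g' x = 0 ∨ g' x = 1) ∧ g' ∈ degLE m (1 / 2) k ∧ probNe f' g' ≤ α ε')
    {ε : ℝ} (hε : ε ∈ Set.Icc (0 : ℝ) 1) (hα : ContinuousWithinAt α (Set.Icc 0 1) ε)
    {f : (Fin n → Bool) → ℝ} (hf : ∀ x, f x = 0 ∨ f x = 1) (hW : WAbove k f ≤ ε) :
    ∃ g : (Fin n → Bool) → ℝ, (∀ x, g x = 0 ∨ g x = 1) ∧
      (∀ S : Finset (Fin n), k < #S → walshCoeff g S = 0) ∧ cProbNe f g ≤ α ε := by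
  let tail (t : ℕ) : ℝ := sExp fun y : PaddedSlice n t =>
    (f (slicePrefix y) - walshTrunc k f (slicePrefix y)) ^ 2
  let δ (t : ℕ) : ℝ := min 1 (max ε (tail t))
  have tail_lim : Tendsto tail atTop (𝓝 (WAbove k f)) := by
    rw [← cExp_sub_walshTrunc_sq]
    exact tendsto_sExp_comp_slicePrefix fun x => (f x - walshTrunc k f x) ^ 2
  have δ_lim : Tendsto δ atTop (𝓝 ε) := by
    simpa only [max_eq_left hW, min_eq_right hε.2] using
      (tendsto_const_nhds (x := (1 : ℝ))).min ((tendsto_const_nhds (x := ε)).max tail_lim)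
  have δ_mem (t : ℕ) : δ t ∈ Set.Icc (0 : ℝ) 1 :=
    ⟨le_min zero_le_one (hε.1.trans (le_max_left _ _)), min_le_left _ _⟩
  have α_lim : Tendsto (fun t => α (δ t)) atTop (𝓝 (α ε)) :=
    hα.tendsto.comp (tendsto_nhdsWithin_iff.2 ⟨δ_lim, .of_forall δ_mem⟩)
  have close (t : ℕ) := exists_mem_cubeDegLE_probNe_comp_slicePrefix_le
    (H (n + (n + (t + t))) ⟨n + t, by ring⟩ (δ t) (δ_mem t)) hf
    (min_le_min_left 1 (le_max_right ε (tail t)))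
  have probNe_lim (g : (Fin n → Bool) → ℝ) :=
    tendsto_sExp_comp_slicePrefix fun x => if f x = g x then (0 : ℝ) else 1
  obtain ⟨g, ⟨hg, hg_deg⟩, hg_close⟩ := exists_mem_le_of_tendsto_of_frequently
    (finite_boolean_cubeDegLE n k) (fun g _ => probNe_lim g) α_lim
    (Frequently.of_forall close)
  exact ⟨g, hg, mem_cubeDegLE.1 hg_deg, hg_close⟩

end Reduction

/-- **Blackbox reduction of the Kindler–Safra theorem to its slice version.** There is a
universal constant `c > 0` such that: if for a continuous `α : [0,1] → [0,1]` every Boolean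
function `f'` on a slice `S(m,1/2)` (`m` even) with `‖f'^{>k}‖₂² ≤ ε'` is `α(ε')`-close to a
degree-`k` Boolean function on the slice, then, whenever `α(ε) < 2^{-c k}`, any
`f : {0,1}ⁿ → {0,1}` with `W^{>k}(f) ≤ ε` is `α(ε)`-close to a degree-`k` Boolean function
on the cube. -/
theorem ks_reduction :
    ∃ c : ℝ, 0 < c ∧
      ∀ (k : ℕ) (α : ℝ → ℝ),
        ContinuousOn α (Set.Icc 0 1) →
        (∀ x ∈ Set.Icc (0 : ℝ) 1, α x ∈ Set.Icc (0 : ℝ) 1) →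
        (∀ (m : ℕ), Even m →
          ∀ (ε' : ℝ), ε' ∈ Set.Icc (0 : ℝ) 1 →
            ∀ f' : SlicePoint m (1 / 2) → ℝ, (∀ x, f' x = 0 ∨ f' x = 1) →
              (∃ fk, IsLowProj m (1 / 2) k f' fk ∧ sNormSq (f' - fk) ≤ ε') →
              ∃ g' : SlicePoint m (1 / 2) → ℝ,
                (∀ x, g' x = 0 ∨ g' x = 1) ∧ g' ∈ degLE m (1 / 2) k ∧
                probNe f' g' ≤ α ε') →
        ∀ (n : ℕ) (ε : ℝ), ε ∈ Set.Icc (0 : ℝ) 1 → α ε < (2 : ℝ) ^ (-(c * k)) →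
          ∀ f : (Fin n → Bool) → ℝ, (∀ x, f x = 0 ∨ f x = 1) → WAbove k f ≤ ε →
            ∃ g : (Fin n → Bool) → ℝ,
              (∀ x, g x = 0 ∨ g x = 1) ∧
              (∀ S : Finset (Fin n), k < S.card → walshCoeff g S = 0) ∧
              cProbNe f g ≤ α ε := by
  exact ⟨1, one_pos, fun k α hα _ H n ε hε _ f hf hW =>
    ks_reduction_general k α H hε (hα ε hε) hf hW⟩
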